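/- Assume k has characteristic 0. Let t ≥ 2 and let p_2, …, p_t ∈ k^× generate a free abelian subgroup of k^× of rank t−1, and let a_0, …, a_t ∈ k, not all zero. Then the following are equivalent: (i) a_i ≠ 0 for every 1 ≤ i ≤ t; (ii) for every nonzero homogeneous polynomial F ∈ k[x_0,…,x_t], the set {n ∈ ℤ : F(a_0 + n·a_1, a_1, p_2^n a_2, …, p_t^n a_t) = 0} is finite (i.e. the orbit of the point (a_0 : ⋯ : a_t) under the automorphism of P^t given by the matrix with a single 2×2 unipotent Jordan block [[1,1],[0,1]] in the first two coordinates and diagonal entries p_2, …, p_t is critically dense). -/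

import Mathlib

set_option synthInstance.maxHeartbeats 1000000
set_option maxHeartbeats 4000000

noncomputable section

/-
On the affine chart `x₁ = a₁` the values of `F` along the orbit form an exponential polynomial
`n ↦ ∑ᵢ Pᵢ(n) λᵢⁿ`, where the `λᵢ` are distinct monomials in the `pⱼ`, so that no quotient `λᵢ / λⱼ`
is a root of unity. Following Lech and Cassels, the coefficients and the `λᵢ^{±1}` generate a ring
which embeds into the integers of a finite extension `K` of some `ℚ_p`. By compactness some power
`r > 0` brings all `λᵢ` close enough to `1` to be exponentials, so along a progression `c + rℤ` the
exponential polynomial extends to an analytic function on the unit ball of `K`. If it has infinitely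
many zeros, they accumulate, and it vanishes near the accumulation point, hence on a whole
progression `c' + Nℤ`. Along this progression its terms are generalized eigenvectors of the shift
for the distinct eigenvalues `λᵢᴺ`, which are linearly independent, so all `Pᵢ` vanish.
-/

open scoped Polynomial

section ExponentialPolynomial

open Polynomial

variable {R ι : Type*} [CommRing R] [Fintype ι]

/-- The exponential polynomial `n ↦ ∑ i, P i (n) * l i ^ n` on `ℤ`; the bases are units because
`n` may be negative. -/
def exponentialPolynomial (P : ι → R[X]) (l : ι → Rˣ) (n : ℤ) : R :=
  ∑ i, (P i).eval (n : R) * ↑(l i ^ n)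

theorem map_exponentialPolynomial {S : Type*} [CommRing S] (φ : R →+* S) (P : ι → R[X])
    (l : ι → Rˣ) (n : ℤ) :
    φ (exponentialPolynomial P l n) =
      exponentialPolynomial (fun i => (P i).map φ) (fun i => Units.map φ (l i)) n := by
  simp only [exponentialPolynomial, map_sum, map_mul, eval_intCast_map, ← map_zpow,
    Units.coe_map, MonoidHom.coe_coe]

theorem exponentialPolynomial_add_mul (P : ι → R[X]) (l : ι → Rˣ) (c N m : ℤ) :
    exponentialPolynomial P l (c + N * m) =
      exponentialPolynomial (fun i => C (↑(l i ^ c) : R) * (P i).comp (C (N : R) * X + C (c : R)))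
        (fun i => l i ^ N) m := by
  refine Finset.sum_congr rfl fun i _ => ?_
  rw [zpow_add, zpow_mul, Units.val_mul, eval_mul, eval_C, eval_comp]
  simp only [eval_add, eval_mul, eval_C, eval_X, Int.cast_add, Int.cast_mul]
  rw [add_comm (c : R)]
  ring

end ExponentialPolynomial

section ZeroProgression

/-- A function on `ℤ` vanishes on an infinite arithmetic progression `c + Nℤ`. -/
def HasZeroProgression {R : Type*} [Zero R] (f : ℤ → R) : Prop :=
  ∃ c N : ℤ, N ≠ 0 ∧ ∀ m : ℤ, f (c + N * m) = 0

theorem HasZeroProgression.of_comp_add_mul {R : Type*} [Zero R] {f : ℤ → R} {c N : ℤ} (hN : N ≠ 0)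
    (hf : HasZeroProgression fun m => f (c + N * m)) : HasZeroProgression f := by
  obtain ⟨d, M, hM, hzero⟩ := hf
  refine ⟨c + N * d, N * M, mul_ne_zero hN hM, fun m => ?_⟩
  rw [add_assoc, mul_assoc, ← mul_add]
  exact hzero m

theorem exists_infinite_setOf_add_mul_mem {s : Set ℤ} (hs : s.Infinite) {N : ℤ} (hN : N ≠ 0) :
    ∃ c : ℤ, {m : ℤ | c + N * m ∈ s}.Infinite := by
  by_contra! hfin
  refine hs (Set.Finite.of_finite_fibers (· % N) ?_ fun c _ => ?_)
  · refine (Set.finite_Ico 0 |N|).subset ?_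
    rintro _ ⟨n, -, rfl⟩
    exact ⟨Int.emod_nonneg n hN, Int.emod_lt_abs n hN⟩
  · refine ((hfin c).image (c + N * ·)).subset ?_
    rintro n ⟨hn, rfl⟩
    refine ⟨n / N, ?_, Int.emod_add_mul_ediv n N⟩
    rwa [Set.mem_ofPred_eq, Int.emod_add_mul_ediv]

end ZeroProgression

section LocalField

open NormedSpace Metric Polynomial Topology

theorem mul_mem_eball_zero_of_norm_le_one {A : Type*} [NormedRing A] {z x : A} {r : ENNReal}
    (hz : ‖z‖ ≤ 1) (hx : x ∈ eball 0 r) : z * x ∈ eball 0 r := by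
  rw [mem_eball_zero_iff] at hx ⊢
  refine (enorm_le_iff_norm_le.2 ?_).trans_lt hx
  exact (norm_mul_le z x).trans (mul_le_of_le_one_left (norm_nonneg x) hz)

theorem exists_pow_mem_of_mem_nhds_one {K ι : Type*} [NormedField K] [ProperSpace K] [Finite ι]
    {x : ι → K} (hx : ∀ i, ‖x i‖ = 1) {U : Set K} (hU : U ∈ 𝓝 1) :
    ∃ r : ℕ, 0 < r ∧ ∀ i, x i ^ r ∈ U := by
  let y : ι → sphere (0 : K) 1 := fun i => ⟨x i, mem_sphere_zero_iff_norm.2 (hx i)⟩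
  have hV : {z : ι → sphere (0 : K) 1 | ∀ i, (z i : K) ∈ U} ∈ 𝓝 1 :=
    Filter.eventually_all.2 fun i =>
      (continuous_subtype_val.comp (continuous_apply i)).continuousAt.eventually_mem hU
  have hreturn := (mapClusterPt_one_atTop_pow y).frequently hV
  obtain ⟨r, hr, hyr⟩ := Filter.frequently_atTop.1 hreturn 1
  exact ⟨r, hr, hyr⟩

section Exp

variable {K : Type*} [NontriviallyNormedField K] [CompleteSpace K] [CharZero K]

theorem exp_image_eball_mem_nhds_one (hr : 0 < (expSeries K K).radius) :
    exp '' eball (0 : K) (expSeries K K).radius ∈ 𝓝 (1 : K) := by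
  rw [← exp_zero, ← (hasStrictDerivAt_exp_zero_of_radius_pos hr).map_nhds_eq one_ne_zero]
  exact Filter.image_mem_map (eball_mem_nhds 0 hr)

theorem analyticOnNhd_exp_mul_const {x : K} (hx : x ∈ eball 0 (expSeries K K).radius) :
    AnalyticOnNhd K (fun z => exp (z * x)) (closedBall 0 1) := by
  intro z hz
  have hzx := mul_mem_eball_zero_of_norm_le_one (mem_closedBall_zero_iff.1 hz) hx
  exact (analyticAt_exp_of_mem_ball (𝕂 := K) _ hzx).fun_comp (f := fun w => w * x)
    (analyticAt_id.fun_mul analyticAt_const)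

theorem exp_intCast_mul [IsUltrametricDist K] {x : K} (hx : x ∈ eball 0 (expSeries K K).radius)
    (n : ℤ) : exp ((n : K) * x) = exp x ^ n := by
  have hmem (m : ℤ) : (m : K) * x ∈ eball 0 (expSeries K K).radius :=
    mul_mem_eball_zero_of_norm_le_one (IsUltrametricDist.norm_intCast_le_one K m) hx
  have hadd (m : ℤ) : exp (((m + 1 : ℤ) : K) * x) = exp ((m : K) * x) * exp x := by
    rw [Int.cast_add, Int.cast_one, add_one_mul, exp_add_of_mem_ball (hmem m) hx]
  have hne : exp x ≠ 0 := (isUnit_exp_of_mem_ball hx).ne_zero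
  induction n with
  | zero => simp only [Int.cast_zero, zero_mul, exp_zero, zpow_zero]
  | succ n ih => rw [hadd, ih, zpow_add_one₀ hne]
  | pred n ih =>
    rw [zpow_sub_one₀ hne, eq_mul_inv_iff_mul_eq₀ hne, ← ih, ← hadd, sub_add_cancel]

end Exp

variable {K ι : Type*} [NontriviallyNormedField K] [ProperSpace K] [IsUltrametricDist K]
  [CharZero K] [Fintype ι]

theorem hasZeroProgression_of_analyticOnNhd {f : K → K}
    (hf : AnalyticOnNhd K f (closedBall 0 1)) (hz : {n : ℤ | f n = 0}.Infinite) :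
    HasZeroProgression fun n : ℤ => f n := by
  set Z : Set K := (Int.cast : ℤ → K) '' {n : ℤ | f n = 0}
  have hZball : Z ⊆ closedBall 0 1 := by
    rintro _ ⟨n, -, rfl⟩
    exact mem_closedBall_zero_iff.2 (IsUltrametricDist.norm_intCast_le_one K n)
  obtain ⟨z₀, hz₀, hacc⟩ := (hz.image Int.cast_injective.injOn).exists_accPt_of_subset_isCompact
    (isCompact_closedBall (0 : K) 1) hZball
  have hev : ∀ᶠ z in 𝓝 z₀, f z = 0 := by
    refine (hf z₀ hz₀).frequently_zero_iff_eventually_zero.1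
      ((accPt_iff_frequently_nhdsNE.1 hacc).mono ?_)
    rintro _ ⟨n, hn, rfl⟩
    exact hn
  obtain ⟨ε, hε, hball⟩ := eventually_nhds_iff_ball.1 hev
  obtain ⟨_, ⟨ha, a, -, rfl⟩, _, ⟨hb, b, -, rfl⟩, hab⟩ :=
    (Set.Infinite.of_accPt (hacc.nhds_inter (ball_mem_nhds z₀ hε))).nontrivial
  refine ⟨a, b - a, sub_ne_zero.2 fun h => hab (by rw [h]), fun m => hball _ ?_⟩
  rw [IsUltrametricDist.ball_eq_of_mem ha] at hb ⊢
  rw [mem_ball_iff_norm, ← Int.cast_sub] at hb ⊢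
  rw [add_sub_cancel_left, Int.cast_mul, norm_mul]
  exact (mul_le_of_le_one_right (norm_nonneg _)
    (IsUltrametricDist.norm_intCast_le_one K m)).trans_lt hb

theorem hasZeroProgression_exponentialPolynomial_of_norm_eq_one
    (hr : 0 < (expSeries K K).radius) (P : ι → K[X]) {l : ι → Kˣ} (hl : ∀ i, ‖(l i : K)‖ = 1)
    (hz : {n | exponentialPolynomial P l n = 0}.Infinite) :
    HasZeroProgression (exponentialPolynomial P l) := by
  obtain ⟨r, hr0, hlr⟩ := exists_pow_mem_of_mem_nhds_one hl (exp_image_eball_mem_nhds_one hr)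
  choose x hx hxl using hlr
  have hN : (r : ℤ) ≠ 0 := by exact_mod_cast hr0.ne'
  obtain ⟨c, hc⟩ := exists_infinite_setOf_add_mul_mem hz hN
  refine .of_comp_add_mul (c := c) hN ?_
  let Q : ι → K[X] := fun i => C (↑(l i ^ c) : K) * (P i).comp (C ((r : ℤ) : K) * X + C (c : K))
  have hexp (m : ℤ) : exponentialPolynomial P l (c + r * m) =
      ∑ i, (Q i).eval (m : K) * exp ((m : K) * x i) := by
    rw [exponentialPolynomial_add_mul]
    refine Finset.sum_congr rfl fun i _ => ?_
    have hbase : ((l i ^ (r : ℤ) : Kˣ) : K) = exp (x i) := by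
      rw [hxl, zpow_natCast, Units.val_pow_eq_pow_val]
    rw [exp_intCast_mul (hx i), ← hbase, Units.val_zpow_eq_zpow_val]
  simp only [Set.mem_ofPred_eq, hexp] at hc ⊢
  refine hasZeroProgression_of_analyticOnNhd
    (f := fun z => ∑ i, (Q i).eval z * exp (z * x i)) ?_ hc
  exact Finset.analyticOnNhd_fun_sum _ fun i _ =>
    ((AnalyticOnNhd.eval_polynomial (Q i)).mono (Set.subset_univ _)).mul
      (analyticOnNhd_exp_mul_const (hx i))

end LocalField

section Padic

open NormedSpace Nat

theorem norm_factorial_inv_padic_le (p : ℕ) [Fact p.Prime] (n : ℕ) :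
    ‖(n ! : ℚ_[p])⁻¹‖ ≤ (p : ℝ) ^ n := by
  have hp : (1 : ℝ) ≤ p := by exact_mod_cast (Fact.out : p.Prime).one_le
  rw [norm_inv, Padic.norm_eq_zpow_neg_valuation (Nat.cast_ne_zero.2 n.factorial_ne_zero),
    Padic.valuation_natCast, zpow_neg, inv_inv, zpow_natCast]
  exact pow_le_pow_right₀ hp (padicValNat_factorial_le p n)

theorem expSeries_radius_pos_of_normedAlgebra_padic (p : ℕ) [Fact p.Prime] (K : Type*)
    [NontriviallyNormedField K] [NormedAlgebra ℚ_[p] K] : 0 < (expSeries K K).radius := by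
  have hp : (p : ℝ) ≠ 0 := by exact_mod_cast (Fact.out : p.Prime).ne_zero
  have hr : (0 : ENNReal) < ((p : NNReal)⁻¹ : NNReal) := by
    exact_mod_cast inv_pos.2 (by exact_mod_cast (Fact.out : p.Prime).pos)
  refine hr.trans_le ((expSeries K K).le_radius_of_bound 1 fun n => ?_)
  have hnorm : ‖expSeries K K n‖ = ‖(n ! : ℚ_[p])⁻¹‖ := by
    rw [expSeries_eq_ofScalars, FormalMultilinearSeries.ofScalars_norm,
      ← map_natCast (algebraMap ℚ_[p] K), ← map_inv₀, norm_algebraMap']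
  rw [hnorm, NNReal.coe_inv, NNReal.coe_natCast, inv_pow, ← div_eq_mul_inv]
  exact div_le_one_of_le₀ (norm_factorial_inv_padic_le p n) (by positivity)

theorem hasZeroProgression_exponentialPolynomial_of_padic (p : ℕ) [Fact p.Prime] {K ι : Type*}
    [NontriviallyNormedField K] [NormedAlgebra ℚ_[p] K] [FiniteDimensional ℚ_[p] K] [Fintype ι]
    (P : ι → K[X]) {l : ι → Kˣ} (hl : ∀ i, ‖(l i : K)‖ = 1)
    (hz : {n | exponentialPolynomial P l n = 0}.Infinite) :
    HasZeroProgression (exponentialPolynomial P l) := by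
  have : ProperSpace K := FiniteDimensional.proper ℚ_[p] K
  have : IsUltrametricDist K := .of_normedAlgebra ℚ_[p]
  have : CharZero K := charZero_of_injective_algebraMap (algebraMap ℚ_[p] K).injective
  exact hasZeroProgression_exponentialPolynomial_of_norm_eq_one
    (expSeries_radius_pos_of_normedAlgebra_padic p K) P hl hz

end Padic

section Embedding

open MvPolynomial

theorem uncountable_padicInt (p : ℕ) [Fact p.Prime] : Uncountable ℤ_[p] := by
  have hopen : IsOpen {x : ℚ_[p] | ‖x‖ ≤ 1} := by
    simpa only [Metric.closedBall, dist_zero_right] using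
      IsUltrametricDist.isOpen_closedBall (0 : ℚ_[p]) one_ne_zero
  have hcard := continuum_le_cardinal_of_isOpen ℚ_[p] hopen ⟨0, norm_zero.trans_le zero_le_one⟩
  exact Cardinal.aleph0_lt_mk_iff.1 (Cardinal.aleph0_lt_continuum.trans_le hcard)

theorem exists_algebraicIndependent_of_uncountable (R : Type*) {A : Type*} (ι : Type*) [CommRing R]
    [Countable R] [CommRing A] [IsDomain A] [Uncountable A] [Algebra R A] [FaithfulSMul R A]
    [Countable ι] : ∃ w : ι → A, AlgebraicIndependent R w := by
  obtain ⟨B, hB⟩ := exists_isTranscendenceBasis R A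
  have : Nontrivial R := (algebraMap R A).domain_nontrivial
  have hinf : Infinite B := by
    by_contra hfin
    rw [not_infinite_iff_finite] at hfin
    have hadjoin : Countable (Algebra.adjoin R (Set.range ((↑) : B → A))) := by
      rw [← Cardinal.mk_le_aleph0_iff, ← Cardinal.lift_le_aleph0]
      exact (Algebra.lift_cardinalMk_adjoin_le R _).trans (by simp)
    have halg := hB.isAlgebraic
    refine not_countable (α := A) (Set.countable_univ_iff.1 ?_)
    exact (Algebraic.countable (Algebra.adjoin R (Set.range ((↑) : B → A))) A).mono
      fun x _ => halg.isAlgebraic x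
  obtain ⟨f, hf⟩ := exists_injective_nat ι
  exact ⟨fun i => Infinite.natEmbedding B (f i),
    hB.1.comp _ ((Infinite.natEmbedding B).injective.comp hf)⟩

theorem isUnit_aeval_of_toZMod_eq {p : ℕ} [Fact p.Prime] {ι : Type*} {z : ι → ℤ_[p]} {a : ι → ℤ}
    (hza : ∀ i, PadicInt.toZMod (z i) = a i) {q : MvPolynomial ι ℤ} (hq : ¬(p : ℤ) ∣ eval a q) :
    IsUnit (aeval z q) := by
  by_contra hu
  refine hq ((ZMod.intCast_zmod_eq_zero_iff_dvd _ p).1 ?_)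
  have hreduce : PadicInt.toZMod (aeval z q) = (eval a q : ZMod p) := by
    have hz := comp_aeval_apply z PadicInt.toZMod.toIntAlgHom q
    have ha := comp_aeval_apply a (Int.castRingHom (ZMod p)).toIntAlgHom q
    simp only [RingHom.toIntAlgHom_apply, hza, eq_intCast, aeval_eq_eval] at hz ha
    exact hz.trans ha.symm
  rw [← hreduce, ← RingHom.mem_ker, PadicInt.ker_toZMod]
  exact (IsLocalRing.mem_maximalIdeal _).2 hu

theorem exists_algebraicIndependent_padicInt_isUnit_aeval {ι : Type*} [Countable ι]
    {q : MvPolynomial ι ℤ} (hq : q ≠ 0) :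
    ∃ (p : ℕ) (_ : Fact p.Prime) (z : ι → ℤ_[p]),
      AlgebraicIndependent ℤ z ∧ IsUnit (aeval z q) := by
  obtain ⟨a, ha⟩ : ∃ a : ι → ℤ, eval a q ≠ 0 := by
    by_contra! h
    exact hq (MvPolynomial.funext fun a => by rw [h, map_zero])
  obtain ⟨p, hpa, hp⟩ := Nat.exists_infinite_primes ((eval a q).natAbs + 1)
  have : Fact p.Prime := ⟨hp⟩
  have := uncountable_padicInt p
  obtain ⟨w, hw⟩ := exists_algebraicIndependent_of_uncountable ℤ (A := ℤ_[p]) ι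
  have hp0 : (p : ℤ) ≠ 0 := Nat.cast_ne_zero.2 hp.ne_zero
  -- `p * w i + a i` reduces to `a i` modulo `p`, and `p` does not divide `q(a)`.
  let f (i : ι) : ℤ[X] := .C (p : ℤ) * .X + .C (a i)
  have hf (i : ι) : Transcendental ℤ (f i) := by
    have hX := (Polynomial.transcendental_X ℤ).aeval (f i)
      (by rw [Polynomial.natDegree_linear hp0]; exact one_ne_zero)
      (by rw [Polynomial.leadingCoeff_linear hp0]; exact mem_nonZeroDivisors_of_ne_zero hp0)
    rwa [Polynomial.aeval_X_left_apply] at hX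
  refine ⟨p, ⟨hp⟩, _, hw.polynomial_aeval_of_transcendental hf,
    isUnit_aeval_of_toZMod_eq (a := a) (fun i => ?_) fun hdvd => ?_⟩
  · simp [f]
  · exact hpa.not_gt (Nat.lt_succ_of_le
      (Nat.le_of_dvd (Int.natAbs_pos.2 ha) (Int.natCast_dvd.1 hdvd)))

theorem exists_injective_algHom_of_isAlgebraic (A R L : Type*) [CommRing A] [CommRing R]
    [IsDomain R] [Algebra A R] [FaithfulSMul A R] [Algebra.IsAlgebraic A R] [Field L]
    [IsAlgClosed L] [Algebra A L] [FaithfulSMul A L] :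
    ∃ φ : R →ₐ[A] L, Function.Injective φ := by
  have : IsDomain A := (FaithfulSMul.algebraMap_injective A R).isDomain
  let φ : R →ₐ[A] L := IsAlgClosed.lift
  let _ : Algebra R L := φ.toRingHom.toAlgebra
  have : IsScalarTower A R L := .of_algebraMap_eq fun a => (φ.commutes a).symm
  exact ⟨φ, Algebra.IsAlgebraic.injective_tower_top R (FaithfulSMul.algebraMap_injective A L)⟩

theorem exists_algebraicIndepOn_isIntegral_smul (k : Type*) {R : Type*} [CommRing k] [CommRing R]
    [IsDomain R] [Algebra k R] [FaithfulSMul k R] (T : Finset R)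
    [Algebra.IsAlgebraic (Algebra.adjoin k (T : Set R)) R] :
    ∃ s ⊆ (T : Set R), AlgebraicIndepOn k id s ∧ Algebra.IsAlgebraic (Algebra.adjoin k s) R ∧
      ∃ c : Algebra.adjoin k s, c ≠ 0 ∧ ∀ t ∈ T, IsIntegral (Algebra.adjoin k s) (c • t) := by
  obtain ⟨s, hsT, hs⟩ := exists_isTranscendenceBasis_subset (R := k) (T : Set R)
  have : Nontrivial k := (algebraMap k R).domain_nontrivial
  have halg := hs.isAlgebraic
  rw [Subtype.range_coe] at halg
  exact ⟨s, hsT, hs.1, halg, Algebra.IsAlgebraic.exists_integral_multiples _ T⟩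

theorem norm_le_one_of_isIntegral {A L : Type*} [CommRing A] [NormedField L] [IsUltrametricDist L]
    [Algebra A L] (hA : ∀ a : A, ‖algebraMap A L a‖ ≤ 1) {x : L} (hx : IsIntegral A x) :
    ‖x‖ ≤ 1 := by
  let v : Valuation L NNReal := NormedField.valuation
  let φ : A →+* v.integer := (algebraMap A L).codRestrict _ hA
  have hxv : IsIntegral v.integer x := hx.map_of_comp_eq φ (RingHom.id L) rfl
  exact (Valuation.integer.integers v).mem_of_integral hxv

theorem norm_map_le_one_of_adjoin_eq_top {R L : Type*} [Ring R] [NormedField L]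
    [IsUltrametricDist L] (φ : R →+* L) {T : Set R} (hT : Algebra.adjoin ℤ T = ⊤)
    (hφ : ∀ t ∈ T, ‖φ t‖ ≤ 1) (x : R) : ‖φ x‖ ≤ 1 := by
  have hx : x ∈ Algebra.adjoin ℤ T := hT ▸ Algebra.mem_top
  induction hx using Algebra.adjoin_induction with
  | mem t ht => exact hφ t ht
  | algebraMap n =>
    rw [eq_intCast, map_intCast]
    exact IsUltrametricDist.norm_intCast_le_one L n
  | add a b _ _ ha hb =>
    rw [map_add]
    exact (IsUltrametricDist.norm_add_le_max _ _).trans (max_le ha hb)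
  | mul a b _ _ ha hb =>
    rw [map_mul, norm_mul]
    exact mul_le_one₀ ha (norm_nonneg _) hb

theorem exists_injective_algHom_padicInt_isUnit {R : Type*} [CommRing R] {s : Set R} [Countable s]
    (hs : AlgebraicIndepOn ℤ id s) {c : Algebra.adjoin ℤ s} (hc : c ≠ 0) :
    ∃ (p : ℕ) (_ : Fact p.Prime) (ψ : Algebra.adjoin ℤ s →ₐ[ℤ] ℤ_[p]),
      Function.Injective ψ ∧ IsUnit (ψ c) := by
  obtain ⟨e⟩ : Nonempty (MvPolynomial s ℤ ≃ₐ[ℤ] Algebra.adjoin ℤ s) :=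
    ⟨hs.aevalEquiv.trans (Subalgebra.equivOfEq _ _ (by rw [Set.image_id]))⟩
  obtain ⟨p, hp, z, hz, hu⟩ := exists_algebraicIndependent_padicInt_isUnit_aeval
    (q := e.symm c) ((map_ne_zero_iff _ e.symm.injective).2 hc)
  let ψ := (MvPolynomial.aeval (R := ℤ) z).comp e.symm.toAlgHom
  have hψ : Function.Injective ψ := Function.Injective.comp (f := e.symm) hz e.symm.injective
  exact ⟨p, hp, ψ, hψ, hu⟩

theorem exists_injective_ringHom_padicAlgCl (R : Type*) [CommRing R] [IsDomain R] [CharZero R]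
    [Algebra.FiniteType ℤ R] :
    ∃ (p : ℕ) (_ : Fact p.Prime) (φ : R →+* PadicAlgCl p),
      Function.Injective φ ∧ ∀ x, ‖φ x‖ ≤ 1 := by
  obtain ⟨T, hT⟩ := Algebra.FiniteType.out (R := ℤ) (A := R)
  have : Algebra.IsAlgebraic (Algebra.adjoin ℤ (T : Set R)) R := by
    rw [hT]
    exact ⟨fun x => isAlgebraic_algebraMap (⟨x, trivial⟩ : (⊤ : Subalgebra ℤ R))⟩
  obtain ⟨s, hsT, hs, halg, c, hc0, hc⟩ := exists_algebraicIndepOn_isIntegral_smul ℤ T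
  have : Finite s := (T.finite_toSet.subset hsT).to_subtype
  obtain ⟨p, hp, ψ, hψ, hψc⟩ := exists_injective_algHom_padicInt_isUnit hs hc0
  -- `R` is integral over `ℤ[s]` only after inverting `c`; since `ψ c` is a `p`-adic unit, this does
  -- not spoil the bound on the norm.
  let _ : Algebra (Algebra.adjoin ℤ s) (PadicAlgCl p) :=
    ((algebraMap ℚ_[p] (PadicAlgCl p)).comp (PadicInt.Coe.ringHom.comp ψ.toRingHom)).toAlgebra
  have hnorm (a : Algebra.adjoin ℤ s) : ‖algebraMap _ (PadicAlgCl p) a‖ = ‖ψ a‖ :=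
    norm_algebraMap' (PadicAlgCl p) (ψ a : ℚ_[p])
  have : FaithfulSMul (Algebra.adjoin ℤ s) (PadicAlgCl p) :=
    (faithfulSMul_iff_algebraMap_injective _ _).2
      ((algebraMap ℚ_[p] (PadicAlgCl p)).injective.comp (Subtype.val_injective.comp hψ))
  obtain ⟨φ, hφ⟩ := exists_injective_algHom_of_isAlgebraic (Algebra.adjoin ℤ s) R (PadicAlgCl p)
  refine ⟨p, hp, φ, hφ, norm_map_le_one_of_adjoin_eq_top _ hT fun t ht => ?_⟩
  have hct : ‖φ (c • t)‖ ≤ 1 := norm_le_one_of_isIntegral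
    (fun a => (hnorm a).trans_le (PadicInt.norm_le_one _)) ((hc t ht).map φ)
  rwa [map_smul, Algebra.smul_def, norm_mul, hnorm, PadicInt.isUnit_iff.1 hψc, one_mul] at hct

theorem exists_finiteDimensional_forall_map_mem (F : Type*) {E R : Type*} [Field F] [Field E]
    [Algebra F E] [Algebra.IsAlgebraic F E] [CommRing R] [Algebra.FiniteType ℤ R] (φ : R →+* E) :
    ∃ L : IntermediateField F E, FiniteDimensional F L ∧ ∀ x, φ x ∈ L := by
  obtain ⟨T, hT⟩ := Algebra.FiniteType.out (R := ℤ) (A := R)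
  have : Finite (φ '' T) := (T.finite_toSet.image φ).to_subtype
  refine ⟨IntermediateField.adjoin F (φ '' T), IntermediateField.finiteDimensional_adjoin
    fun x _ => Algebra.IsIntegral.isIntegral x, fun x => ?_⟩
  have hle : Algebra.adjoin ℤ (T : Set R) ≤
      ((IntermediateField.adjoin F (φ '' T)).toSubalgebra.restrictScalars ℤ).comap φ.toIntAlgHom :=
    Algebra.adjoin_le fun t ht => IntermediateField.subset_adjoin F _ (Set.mem_image_of_mem φ ht)
  rw [hT] at hle
  exact hle Algebra.mem_top

theorem norm_map_unit_eq_one {R L : Type*} [Ring R] [NormedDivisionRing L] {φ : R →+* L}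
    (hφ : ∀ x, ‖φ x‖ ≤ 1) (u : Rˣ) : ‖φ u‖ = 1 := by
  have hmul : ‖φ u‖ * ‖φ ↑u⁻¹‖ = 1 := by
    rw [← norm_mul, ← map_mul, Units.mul_inv, map_one, norm_one]
  exact (hφ u).antisymm (hmul.ge.trans (mul_le_of_le_one_right (norm_nonneg _) (hφ _)))

end Embedding

section Transfer

open Polynomial

variable {ι R : Type*} [CommRing R]

theorem exists_finiteType_subalgebra_lift [Finite ι] (P : ι → R[X]) (l : ι → Rˣ) :
    ∃ S : Subalgebra ℤ R, Algebra.FiniteType ℤ S ∧ ∃ (Q : ι → S[X]) (m : ι → Sˣ),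
      (∀ i, (Q i).map (algebraMap S R) = P i) ∧ ∀ i, Units.map (algebraMap S R) (m i) = l i := by
  let T : Set R := (Set.range (fun i => (l i : R)) ∪ Set.range fun i => (↑(l i)⁻¹ : R)) ∪
    ⋃ i, ((P i).coeffs : Set R)
  have hT : T.Finite := ((Set.finite_range _).union (Set.finite_range _)).union
    (Set.finite_iUnion fun i => Finset.finite_toSet _)
  let S := Algebra.adjoin ℤ T
  have hTS : T ⊆ S := Algebra.subset_adjoin
  have hl (i) : (l i : R) ∈ S := hTS (Or.inl (Or.inl ⟨i, rfl⟩))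
  have hlinv (i) : (↑(l i)⁻¹ : R) ∈ S := hTS (Or.inl (Or.inr ⟨i, rfl⟩))
  have hP (i) : ∃ Q : S[X], Q.map (algebraMap S R) = P i := by
    rw [← mem_lifts, lifts_iff_coeffs_subset_range]
    exact fun x hx => ⟨⟨x, hTS (Or.inr (Set.mem_iUnion.2 ⟨i, hx⟩))⟩, rfl⟩
  choose Q hQ using hP
  exact ⟨S, .adjoin_of_finite hT, Q,
    fun i => ⟨⟨_, hl i⟩, ⟨_, hlinv i⟩, Subtype.ext (l i).mul_inv, Subtype.ext (l i).inv_mul⟩,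
    hQ, fun i => Units.ext rfl⟩

variable [Fintype ι]

theorem exponentialPolynomial_map_eq_zero_iff {S : Type*} [CommRing S] {φ : R →+* S}
    (hφ : Function.Injective φ) {P : ι → R[X]} {l : ι → Rˣ} {n : ℤ} :
    exponentialPolynomial (fun i => (P i).map φ) (fun i => Units.map φ (l i)) n = 0 ↔
      exponentialPolynomial P l n = 0 := by
  rw [← map_exponentialPolynomial, map_eq_zero_iff φ hφ]

theorem hasZeroProgression_exponentialPolynomial_of_finiteType [IsDomain R] [CharZero R]
    [Algebra.FiniteType ℤ R] {P : ι → R[X]} {l : ι → Rˣ}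
    (hz : {n | exponentialPolynomial P l n = 0}.Infinite) :
    HasZeroProgression (exponentialPolynomial P l) := by
  obtain ⟨p, _, φ, hφ, hnorm⟩ := exists_injective_ringHom_padicAlgCl R
  obtain ⟨L, _, hL⟩ := exists_finiteDimensional_forall_map_mem ℚ_[p] φ
  let ψ : R →+* L := φ.codRestrict L hL
  have hψ : Function.Injective ψ := fun x y hxy => hφ (congrArg Subtype.val hxy)
  simp only [HasZeroProgression, ← exponentialPolynomial_map_eq_zero_iff hψ] at hz ⊢
  exact hasZeroProgression_exponentialPolynomial_of_padic p _
    (fun i => norm_map_unit_eq_one (φ := ψ) hnorm (l i)) hz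

theorem hasZeroProgression_exponentialPolynomial [IsDomain R] [CharZero R] {P : ι → R[X]}
    {l : ι → Rˣ} (hz : {n | exponentialPolynomial P l n = 0}.Infinite) :
    HasZeroProgression (exponentialPolynomial P l) := by
  obtain ⟨S, _, Q, m, hQ, hm⟩ := exists_finiteType_subalgebra_lift P l
  have hS : Function.Injective (algebraMap S R) := Subtype.val_injective
  have : CharZero S := charZero_of_injective_algebraMap (FaithfulSMul.algebraMap_injective ℤ S)
  obtain rfl : (fun i => (Q i).map (algebraMap S R)) = P := funext hQ
  obtain rfl : (fun i => Units.map (algebraMap S R) (m i)) = l := funext hm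
  simp only [HasZeroProgression, exponentialPolynomial_map_eq_zero_iff hS] at hz ⊢
  exact hasZeroProgression_exponentialPolynomial_of_finiteType hz

end Transfer

section LinearRecurrence

open Polynomial

variable {R ι : Type*} [CommRing R]

theorem shift_sub_smul_pow_apply (u : Rˣ) (h : ℤ → R) (N : ℕ) :
    ((LinearMap.funLeft R R (· + 1 : ℤ → ℤ) - (u : R) • (1 : Module.End R (ℤ → R))) ^ N)
      (fun n => h n * ↑(u ^ n)) = fun n => (fwdDiff 1)^[N] h n * ↑(u ^ (n + N)) := by
  induction N with
  | zero => simp only [pow_zero, Module.End.one_apply, Function.iterate_zero, id, Nat.cast_zero,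
      add_zero]
  | succ N ih =>
    rw [pow_succ', Module.End.mul_apply, ih, Function.iterate_succ_apply']
    ext n
    simp only [LinearMap.sub_apply, LinearMap.smul_apply, Module.End.one_apply, Pi.sub_apply,
      Pi.smul_apply, LinearMap.funLeft_apply, smul_eq_mul, fwdDiff, Nat.cast_succ]
    rw [add_right_comm n 1, ← add_assoc, zpow_add_one, Units.val_mul]
    ring

theorem fwdDiff_iter_eval_intCast (P : R[X]) :
    (fwdDiff 1)^[P.natDegree + 1] (fun n : ℤ => P.eval (n : R)) = 0 := by
  ext n
  have hzero := congrFun P.fwdDiff_iter_degree_add_one_eq_zero (n : R)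
  rw [fwdDiff_iter_eq_sum_shift] at hzero ⊢
  simpa using hzero

theorem eval_mul_zpow_mem_maxGenEigenspace (P : R[X]) (u : Rˣ) :
    (fun n : ℤ => P.eval (n : R) * ↑(u ^ n)) ∈
      Module.End.maxGenEigenspace (LinearMap.funLeft R R (· + 1 : ℤ → ℤ)) (u : R) := by
  rw [Module.End.mem_maxGenEigenspace]
  refine ⟨P.natDegree + 1, ?_⟩
  rw [shift_sub_smul_pow_apply u (fun n => P.eval (n : R)), fwdDiff_iter_eval_intCast]
  ext n
  exact zero_mul _

variable [IsDomain R] [CharZero R] [Fintype ι]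

theorem eq_zero_of_exponentialPolynomial_eq_zero {P : ι → R[X]} {l : ι → Rˣ}
    (hl : Function.Injective l) (h : exponentialPolynomial P l = 0) : P = 0 := by
  have hind := (Module.End.independent_maxGenEigenspace
    (LinearMap.funLeft R R (· + 1 : ℤ → ℤ))).comp (Units.val_injective.comp hl)
  rw [iSupIndep_iff_finsetSum_eq_zero_imp_eq_zero] at hind
  ext1 i
  have hi := hind Finset.univ (fun i (n : ℤ) => (P i).eval (n : R) * ((l i ^ n : Rˣ) : R))
    (fun i _ => eval_mul_zpow_mem_maxGenEigenspace (P i) (l i))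
    (by rw [← h]; ext n; exact Finset.sum_apply _ _ _) i (Finset.mem_univ i)
  refine eq_zero_of_infinite_isRoot _ (Set.infinite_of_injective_forall_mem Int.cast_injective
    fun n : ℤ => ?_)
  exact (Units.mul_left_eq_zero _).1 (congrFun hi n)

/-- No quotient of two distinct members of the family is a root of unity. -/
def IsNondegenerate {G : Type*} [Group G] (l : ι → G) : Prop :=
  ∀ N : ℤ, N ≠ 0 → Function.Injective fun i => l i ^ N

theorem finite_setOf_exponentialPolynomial_eq_zero {P : ι → R[X]} {l : ι → Rˣ}
    (hl : IsNondegenerate l) (hP : P ≠ 0) : {n | exponentialPolynomial P l n = 0}.Finite := by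
  by_contra hinf
  obtain ⟨c, N, hN, hzero⟩ := hasZeroProgression_exponentialPolynomial hinf
  simp only [exponentialPolynomial_add_mul] at hzero
  have hcoeff := eq_zero_of_exponentialPolynomial_eq_zero (hl N hN) (funext hzero)
  have hN' : (N : R) ≠ 0 := Int.cast_ne_zero.2 hN
  refine hP (funext fun i => ?_)
  have hcomp : (P i).comp (C (N : R) * X + C (c : R)) = 0 :=
    (mul_eq_zero.1 (congrFun hcoeff i)).resolve_left (C_ne_zero.2 (Units.ne_zero _))
  refine (comp_eq_zero_iff.1 hcomp).resolve_right fun hconst => ?_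
  have hdeg := natDegree_linear (b := (c : R)) hN'
  rw [hconst.2, natDegree_C] at hdeg
  exact zero_ne_one hdeg

end LinearRecurrence

section CriticalDensity

open MvPolynomial

theorem isNondegenerate_prod_pow {σ G : Type*} [Fintype σ] [CommGroup G] {u : σ → G}
    (hu : ∀ m : σ → ℤ, ∏ i, u i ^ m i = 1 → ∀ i, m i = 0) :
    IsNondegenerate fun m : σ →₀ ℕ => ∏ i, u i ^ m i := by
  intro N hN m m' hmm
  have hprod : ∏ i, u i ^ (((m i : ℤ) - m' i) * N) = 1 := by
    simp only [zpow_mul, zpow_sub, zpow_natCast, Finset.prod_zpow, Finset.prod_mul_distrib,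
      Finset.prod_inv_distrib, mul_zpow, inv_zpow]
    exact mul_inv_eq_one.2 hmm
  ext i
  exact_mod_cast sub_eq_zero.1 ((mul_eq_zero.1 (hu _ hprod i)).resolve_right hN)

theorem eval₂_zpow_eq_exponentialPolynomial {σ R : Type*} [Fintype σ] [CommRing R]
    (F : MvPolynomial σ R[X]) (u : σ → Rˣ) (n : ℤ) :
    eval₂ (Polynomial.evalRingHom (n : R)) (fun i => ↑(u i ^ n)) F =
      exponentialPolynomial (fun m : F.support => coeff m.1 F)
        (fun m => ∏ i, u i ^ m.1 i) n := by
  rw [eval₂_eq', ← Finset.sum_coe_sort, exponentialPolynomial]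
  refine Finset.sum_congr rfl fun m _ => ?_
  rw [Polynomial.coe_evalRingHom, ← Finset.prod_zpow, Units.coe_prod]
  simp only [← Units.val_pow_eq_pow_val, ← zpow_natCast, ← zpow_mul, mul_comm n]

theorem finite_setOf_eval₂_zpow_eq_zero {σ R : Type*} [Fintype σ] [CommRing R] [IsDomain R]
    [CharZero R] {F : MvPolynomial σ R[X]} (hF : F ≠ 0) {u : σ → Rˣ}
    (hu : ∀ m : σ → ℤ, ∏ i, u i ^ m i = 1 → ∀ i, m i = 0) :
    {n : ℤ | eval₂ (Polynomial.evalRingHom (n : R)) (fun i => ↑(u i ^ n)) F = 0}.Finite := by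
  simp only [eval₂_zpow_eq_exponentialPolynomial]
  refine finite_setOf_exponentialPolynomial_eq_zero
    (fun N hN => (isNondegenerate_prod_pow hu N hN).comp Subtype.val_injective) fun hzero => ?_
  obtain ⟨m, hm⟩ := support_nonempty.2 hF
  exact mem_support_iff.1 hm (congrFun hzero ⟨m, hm⟩)

theorem eval_smul_of_isHomogeneous {σ R : Type*} [CommSemiring R] {F : MvPolynomial σ R} {d : ℕ}
    (hF : F.IsHomogeneous d) (c : R) (v : σ → R) : eval (c • v) F = c ^ d * eval v F := by
  rw [eval_eq, eval_eq, Finset.mul_sum]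
  refine Finset.sum_congr rfl fun m hm => ?_
  have hd : ∑ i ∈ m.support, m i = d := by
    rw [← Finsupp.degree_apply, Finsupp.degree_eq_weight_one]
    exact hF (mem_support_iff.1 hm)
  simp only [Pi.smul_apply, smul_eq_mul, mul_pow, Finset.prod_mul_distrib,
    Finset.prod_pow_eq_pow_sum, hd]
  ring

theorem eq_zero_of_isHomogeneous_of_forall_eval_eq_zero {σ k : Type*} [Field k] [Infinite k]
    {F : MvPolynomial σ k} {d : ℕ} (hF : F.IsHomogeneous d) (i : σ) {a : k} (ha : a ≠ 0)
    (h : ∀ v : σ → k, v i = a → eval v F = 0) : F = 0 := by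
  have hXF : X i * F = 0 := by
    refine MvPolynomial.funext fun v => ?_
    rw [map_mul, eval_X, map_zero]
    by_cases hv : v i = 0
    · rw [hv, zero_mul]
    have hc : a / v i ≠ 0 := div_ne_zero ha hv
    have hsmul := h ((a / v i) • v) (div_mul_cancel₀ a hv)
    rw [eval_smul_of_isHomogeneous hF] at hsmul
    rw [(mul_eq_zero.1 hsmul).resolve_left (pow_ne_zero d hc), mul_zero]
  exact (mul_eq_zero.1 hXF).resolve_left (X_ne_zero i)

section JordanChart

variable {k : Type*} {s : ℕ}

/-- The restriction of a polynomial to the affine chart `x₁ = a₁`, in the coordinates `X` and `yᵢ`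
given by `x₀ = a₀ + a₁ X` and `xᵢ₊₂ = bᵢ yᵢ`. The `n`-th orbit point of `(a₀ : a₁ : b)` has
coordinates `X = n` and `yᵢ = pᵢ ^ n`. -/
def jordanChart [CommSemiring k] (a0 a1 : k) (b : Fin s → k) :
    MvPolynomial (Fin (s + 2)) k →ₐ[k] MvPolynomial (Fin s) k[X] :=
  aeval (Fin.cons (C (.C a0 + .X * .C a1)) (Fin.cons (C (.C a1)) fun i => X i * C (.C (b i))))

theorem eval₂_jordanChart [CommSemiring k] (a0 a1 : k) (b : Fin s → k)
    (F : MvPolynomial (Fin (s + 2)) k) (x : k) (y : Fin s → k) :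
    eval₂ (Polynomial.evalRingHom x) y (jordanChart a0 a1 b F) =
      eval (Fin.cons (a0 + x * a1) (Fin.cons a1 fun i => y i * b i)) F := by
  suffices ((eval₂Hom (Polynomial.evalRingHom x) y).comp (jordanChart a0 a1 b).toRingHom) =
      eval (Fin.cons (a0 + x * a1) (Fin.cons a1 fun i => y i * b i)) from
    RingHom.congr_fun this F
  ext i
  · simp
  · refine Fin.cases ?_ (Fin.cases ?_ fun i => ?_) i <;> simp [jordanChart, mul_comm x]

theorem eq_zero_of_jordanChart_eq_zero [Field k] [Infinite k] {a0 a1 : k} {b : Fin s → k}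
    (ha1 : a1 ≠ 0) (hb : ∀ i, b i ≠ 0) {F : MvPolynomial (Fin (s + 2)) k} {d : ℕ}
    (hF : F.IsHomogeneous d) (h : jordanChart a0 a1 b F = 0) : F = 0 := by
  refine eq_zero_of_isHomogeneous_of_forall_eval_eq_zero hF 1 ha1 fun v hv => ?_
  have hcoord : v = Fin.cons (a0 + (v 0 - a0) / a1 * a1)
      (Fin.cons a1 fun i => v i.succ.succ / b i * b i) := by
    refine funext (Fin.cases ?_ (Fin.cases hv fun i => ?_))
    · rw [Fin.cons_zero, div_mul_cancel₀ _ ha1, add_sub_cancel]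
    · rw [Fin.cons_succ, Fin.cons_succ, div_mul_cancel₀ _ (hb i)]
  rw [hcoord, ← eval₂_jordanChart, h, eval₂_zero]

end JordanChart

end CriticalDensity

section Orbit

variable {k : Type*} [Field k] {s : ℕ} {p : Fin s → k} {a0 a1 : k} {b : Fin s → k}

theorem finite_setOf_eval_orbit_eq_zero [CharZero k] (hp0 : ∀ i, p i ≠ 0)
    (hfree : ∀ m : Fin s → ℤ, (∏ i, p i ^ m i) = 1 → ∀ i, m i = 0) (ha1 : a1 ≠ 0)
    (hb : ∀ i, b i ≠ 0) {F : MvPolynomial (Fin (s + 2)) k} {d : ℕ} (hF : F ≠ 0)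
    (hd : F.IsHomogeneous d) :
    {n : ℤ | MvPolynomial.eval
      (Fin.cons (a0 + (n : k) * a1) (Fin.cons a1 fun i => p i ^ n * b i)) F = 0}.Finite := by
  lift p to Fin s → kˣ using fun i => (hp0 i).isUnit
  have hu (m : Fin s → ℤ) (hm : ∏ i, p i ^ m i = 1) : ∀ i, m i = 0 :=
    hfree m (by simpa using congrArg Units.val hm)
  have hchart := mt (eq_zero_of_jordanChart_eq_zero (a0 := a0) ha1 hb hd) hF
  simpa only [eval₂_jordanChart, Units.val_zpow_eq_zpow_val] using
    finite_setOf_eval₂_zpow_eq_zero hchart hu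

theorem exists_apply_ne_zero_of_finite_setOf_eval_eq_zero {α σ R : Type*} [Infinite α]
    [CommSemiring R] {x : α → σ → R} (i : σ)
    (h : {n | MvPolynomial.eval (x n) (MvPolynomial.X i) = 0}.Finite) : ∃ n, x n i ≠ 0 := by
  obtain ⟨n, hn⟩ := h.exists_notMem
  exact ⟨n, fun hzero => hn ((MvPolynomial.eval_X i).trans hzero)⟩

end Orbit

theorem stmt_16_general {k : Type*} [Field k] [CharZero k] {s : ℕ} {p : Fin s → k}
    (hp0 : ∀ i, p i ≠ 0)
    (hfree : ∀ m : Fin s → ℤ, (∏ i, p i ^ m i) = 1 → ∀ i, m i = 0)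
    (a0 a1 : k) (b : Fin s → k) :
    (a1 ≠ 0 ∧ ∀ i, b i ≠ 0) ↔
      ∀ F : MvPolynomial (Fin (s + 2)) k, F ≠ 0 → (∃ d, F.IsHomogeneous d) →
        {n : ℤ | MvPolynomial.eval
          (Fin.cons (a0 + (n : k) * a1) (Fin.cons a1 fun i => p i ^ n * b i)) F = 0}.Finite := by
  constructor
  · rintro ⟨ha1, hb⟩ F hF ⟨d, hd⟩
    exact finite_setOf_eval_orbit_eq_zero hp0 hfree ha1 hb hF hd
  · intro h
    have hcoord (i : Fin (s + 2)) := exists_apply_ne_zero_of_finite_setOf_eval_eq_zero i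
      (h (MvPolynomial.X i) (MvPolynomial.X_ne_zero i) ⟨1, MvPolynomial.isHomogeneous_X k i⟩)
    refine ⟨?_, fun i => ?_⟩
    · obtain ⟨n, hn⟩ := hcoord (Fin.succ 0)
      simpa only [Fin.cons_succ, Fin.cons_zero] using hn
    · obtain ⟨n, hn⟩ := hcoord i.succ.succ
      rw [Fin.cons_succ, Fin.cons_succ] at hn
      exact right_ne_zero_of_mul hn

/-- in characteristic `0`, with `p₂, …, p_t` generating a free abelian
subgroup of `k˟` of rank `t − 1` (here `t = s + 1 ≥ 2`, so `ℙ^t` has `s + 2` homogeneous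
coordinates), the orbit of `(a₀ : a₁ : ⋯ : a_t)` under the automorphism with one
unipotent `2×2` Jordan block and diagonal part `p₂, …, p_t` is critically dense iff
`aᵢ ≠ 0` for all `1 ≤ i ≤ t`. -/
theorem stmt_16 {k : Type*} [Field k] [IsAlgClosed k] [CharZero k]
    (s : ℕ) (hs : 1 ≤ s) (p : Fin s → k)
    (hp0 : ∀ i, p i ≠ 0)
    (hfree : ∀ m : Fin s → ℤ, (∏ i, p i ^ m i) = 1 → ∀ i, m i = 0)
    (a0 a1 : k) (b : Fin s → k)
    (ha : ¬ (a0 = 0 ∧ a1 = 0 ∧ ∀ i, b i = 0)) :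
    (a1 ≠ 0 ∧ ∀ i, b i ≠ 0) ↔
      ∀ F : MvPolynomial (Fin (s + 2)) k, F ≠ 0 → (∃ d, F.IsHomogeneous d) →
        {n : ℤ | MvPolynomial.eval
          (Fin.cons (a0 + (n : k) * a1) (Fin.cons a1 fun i => p i ^ n * b i)) F = 0}.Finite :=
  stmt_16_general hp0 hfree a0 a1 b
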